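/- arXiv:1712.03090 — 2 statements merged into one kernel-verified Lean document; each statement's English description precedes it below -/
import Mathlib

section
/- Let R, P_c, T_c > 0 and m ≥ 0, and let a(T) = 0.45724·(R²T_c²/P_c)·(1 + m(1 − √(T/T_c)))² for T > 0. Then a''(T) ≥ 0 for every T > 0; in particular, a is a convex function on the interval (0, ∞). -/
/-! Expanding the square, `(1 + m (1 - √x))² = (1 + m)² + m² x - 2 m (1 + m) √x` on `[0, ∞)`: an
affine function minus a multiple of the concave function `√`, the multiple being nonnegative as
soon as `0 ≤ m (1 + m)`. -/

/-- The Soave alpha function of the reduced temperature `x = T / T_c`, that is, the energy parameter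
divided by its value at the critical temperature. -/
noncomputable def soaveAlpha (m x : ℝ) : ℝ :=
  (1 + m * (1 - √x)) ^ 2

namespace soaveAlpha

variable {m x : ℝ}

lemma eq_of_nonneg (m : ℝ) (hx : 0 ≤ x) :
    soaveAlpha m x = (1 + m) ^ 2 + m ^ 2 * x - 2 * (m * (1 + m)) * √x := by
  unfold soaveAlpha
  linear_combination m ^ 2 * Real.sq_sqrt hx

lemma hasDerivAt (m : ℝ) (hx : 0 < x) :
    HasDerivAt (soaveAlpha m) (m ^ 2 - m * (1 + m) * (√x)⁻¹) x := by
  have hsqrt : √x ≠ 0 := (Real.sqrt_pos.2 hx).ne'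
  have h := ((((Real.hasDerivAt_sqrt hx.ne').const_sub 1).const_mul m).const_add 1).pow 2
  refine h.congr_deriv ?_
  field_simp
  ring

lemma hasDerivAt_deriv (m : ℝ) (hx : 0 < x) :
    HasDerivAt (deriv (soaveAlpha m)) (m * (1 + m) / (2 * x * √x)) x := by
  have hsqrt : √x ≠ 0 := (Real.sqrt_pos.2 hx).ne'
  have hderiv : deriv (soaveAlpha m) =ᶠ[nhds x] fun y ↦ m ^ 2 - m * (1 + m) * (√y)⁻¹ :=
    (eventually_gt_nhds hx).mono fun y hy ↦ (hasDerivAt m hy).deriv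
  have hinv := (Real.hasDerivAt_sqrt hx.ne').fun_inv hsqrt
  have h := (hinv.const_mul (m * (1 + m))).const_sub (m ^ 2)
  refine (h.congr_of_eventuallyEq hderiv).congr_deriv ?_
  rw [Real.sq_sqrt hx.le]
  field_simp

lemma convexOn (hm : 0 ≤ m * (1 + m)) : ConvexOn ℝ (Set.Ici 0) (soaveAlpha m) := by
  have haffine : ConvexOn ℝ (Set.Ici 0) fun x : ℝ ↦ (1 + m) ^ 2 + m ^ 2 * x :=
    (convexOn_const _ (convex_Ici 0)).add ((convexOn_id (convex_Ici 0)).smul (sq_nonneg m))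
  have hsqrt : ConcaveOn ℝ (Set.Ici 0) fun x ↦ 2 * (m * (1 + m)) * √x :=
    Real.strictConcaveOn_sqrt.concaveOn.smul (by positivity)
  exact (haffine.sub hsqrt).congr fun x hx ↦ (eq_of_nonneg m hx).symm

end soaveAlpha

lemma deriv_deriv_const_mul_comp_div (f : ℝ → ℝ) (c τ x : ℝ) :
    deriv (deriv fun y ↦ c * f (y / τ)) x = c / τ ^ 2 * deriv (deriv f) (x / τ) := by
  have hderiv (g : ℝ → ℝ) (k : ℝ) :
      (deriv fun y ↦ k * g (y / τ)) = fun y ↦ k / τ * deriv g (y / τ) := by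
    funext y
    simp only [deriv_const_mul_field, div_eq_inv_mul, deriv_comp_mul_left, smul_eq_mul]
    ring
  rw [hderiv, hderiv, div_div, ← sq]

lemma convexOn_const_mul_comp_div {f : ℝ → ℝ} {c τ : ℝ} (hf : ConvexOn ℝ (Set.Ici 0) f)
    (hc : 0 ≤ c) (hτ : 0 ≤ τ) : ConvexOn ℝ (Set.Ici 0) fun x ↦ c * f (x / τ) := by
  have hcomp := hf.comp_linearMap (LinearMap.mulRight ℝ τ⁻¹)
  exact (hcomp.smul hc).subset (fun x hx ↦ mul_nonneg hx (inv_nonneg.2 hτ)) (convex_Ici 0)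

theorem pr_energy_param_convex_general {a : ℝ → ℝ} {c Tc m : ℝ} (hc : 0 ≤ c) (hTc : 0 < Tc)
    (hm : 0 ≤ m * (1 + m))
    (ha : ∀ T : ℝ, 0 < T → a T = c * (1 + m * (1 - √(T / Tc))) ^ 2) :
    (∀ T : ℝ, 0 < T → 0 ≤ deriv (deriv a) T) ∧ ConvexOn ℝ (Set.Ioi (0 : ℝ)) a := by
  have ha' : Set.EqOn a (fun T ↦ c * soaveAlpha m (T / Tc)) (Set.Ioi 0) := ha
  constructor
  · intro T hT
    have hnear := ha'.eventuallyEq_of_mem (Ioi_mem_nhds hT)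
    rw [hnear.deriv.deriv_eq, deriv_deriv_const_mul_comp_div,
      (soaveAlpha.hasDerivAt_deriv m (div_pos hT hTc)).deriv]
    positivity
  · have hconv := convexOn_const_mul_comp_div (soaveAlpha.convexOn hm) hc hTc.le
    exact (hconv.subset Set.Ioi_subset_Ici_self (convex_Ioi 0)).congr ha'.symm

/-- Peng–Robinson energy parameter: `a'' ≥ 0` on `(0, ∞)`; in particular `a` is
convex on `(0, ∞)`. -/
theorem pr_energy_param_convex
    (R Pc Tc m : ℝ) (hR : 0 < R) (hPc : 0 < Pc) (hTc : 0 < Tc) (hm : 0 ≤ m)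
    (a : ℝ → ℝ)
    (ha : ∀ T : ℝ, 0 < T →
      a T = 0.45724 * (R ^ 2 * Tc ^ 2 / Pc) * (1 + m * (1 - Real.sqrt (T / Tc))) ^ 2) :
    (∀ T : ℝ, 0 < T → 0 ≤ deriv (deriv a) T) ∧ ConvexOn ℝ (Set.Ioi (0 : ℝ)) a :=
  pr_energy_param_convex_general (by positivity) hTc (by positivity) ha
end

section
/- Let d ≥ 1, let f_b : ℝ × ℝ → ℝ and c : ℝ → ℝ be smooth, and let n, T : ℝ × ℝ^d → ℝ and u : ℝ × ℝ^d → ℝ^d be smooth, satisfying the mass conservation equation ∂n/∂t + ∇·(nu) = 0 at every point. Define (at each (t,x)) μ_b = ∂₁f_b(n,T), γ_b = ∂₂f_b(n,T), μ = μ_b − ∇·(c(T)∇n), γ = γ_b + (1/2)c'(T)|∇n|², and the Helmholtz free energy density f = f_b(n,T) + (1/2)c(T)|∇n|². Then at every point: ∂f/∂t = γ·∂T/∂t − μ·∇·(nu) − ∇·( (∇·(un))·c(T)∇n ), where all spatial operators act on the x-variable. -/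
/-!
Mass conservation enters only through `∇·(nu) = -∂ₜn`. After this substitution the claim reads
`∂ₜf = γ ∂ₜT + μ ∂ₜn + ∇·(∂ₜn c(T)∇n)`, a pointwise identity valid for all `n` and `T`: the chain
rule gives `∂ₜf = γ ∂ₜT + μ_b ∂ₜn + c(T)∇n · ∂ₜ∇n`, and since `∂ₜ∇n = ∇∂ₜn`, the last term is
`∇·(∂ₜn c(T)∇n) - ∂ₜn ∇·(c(T)∇n)` by the product rule for the divergence.
-/

section Calculus

variable {𝕜 E F G H : Type*} [NontriviallyNormedField 𝕜]
  [NormedAddCommGroup E] [NormedSpace 𝕜 E] [NormedAddCommGroup F] [NormedSpace 𝕜 F]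
  [NormedAddCommGroup G] [NormedSpace 𝕜 G] [NormedAddCommGroup H] [NormedSpace 𝕜 H]

theorem fderiv_curried_comp_apply {g : F → G → H} {a : E → F} {b : E → G} {x : E}
    (hg : DifferentiableAt 𝕜 (fun p : F × G ↦ g p.1 p.2) (a x, b x))
    (ha : DifferentiableAt 𝕜 a x) (hb : DifferentiableAt 𝕜 b x) (v : E) :
    fderiv 𝕜 (fun y ↦ g (a y) (b y)) x v =
      fderiv 𝕜 (fun s ↦ g s (b x)) (a x) (fderiv 𝕜 a x v) +
        fderiv 𝕜 (fun s ↦ g (a x) s) (b x) (fderiv 𝕜 b x v) := by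
  have hg' := hg.hasFDerivAt
  have hleft := hg'.comp (a x) (hasFDerivAt_prodMk_left (𝕜 := 𝕜) (a x) (b x))
  have hright := hg'.comp (b x) (hasFDerivAt_prodMk_right (𝕜 := 𝕜) (a x) (b x))
  have hdiag := hg'.comp x (ha.hasFDerivAt.prodMk hb.hasFDerivAt)
  simp only [Function.comp_def] at hleft hright hdiag
  rw [hdiag.fderiv, hleft.fderiv, hright.fderiv]
  simp [← map_add]

theorem fderiv_fderiv_apply_comm {f : E → F} {x : E} (hf : IsSymmSndFDerivAt 𝕜 f x)
    (hf' : DifferentiableAt 𝕜 (fderiv 𝕜 f) x) (v w : E) :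
    fderiv 𝕜 (fun y ↦ fderiv 𝕜 f y v) x w = fderiv 𝕜 (fun y ↦ fderiv 𝕜 f y w) x v := by
  simpa [fderiv_clm_apply hf' (differentiableAt_const _)] using hf w v

theorem differentiableAt_fderiv_of_contDiffAt_two {f : E → F} {x : E} (hf : ContDiffAt 𝕜 2 f x) :
    DifferentiableAt 𝕜 (fderiv 𝕜 f) x :=
  (hf.fderiv_right (m := 1) (by norm_num)).differentiableAt (by simp)

end Calculus

noncomputable section Helmholtz

variable {E ι : Type*} [NormedAddCommGroup E] [NormedSpace ℝ E] [Fintype ι]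

/-- The divergence `∇·v` of the field with components `v i`, where `∂ᵢ` is the derivative in the
direction `e i`. Taking for `e` the spatial basis of space-time gives the divergence in `x` only. -/
def frameDiv (e : ι → E) (v : ι → E → ℝ) (x : E) : ℝ :=
  ∑ i, fderiv ℝ (v i) x (e i)

/-- The squared length `|∇n|²` of the gradient, with `∂ᵢ` the derivative in the direction `e i`. -/
def frameGradSq (e : ι → E) (n : E → ℝ) (x : E) : ℝ :=
  ∑ i, fderiv ℝ n x (e i) ^ 2

/-- The Helmholtz free energy density `f = f_b(n,T) + ½ c(T)|∇n|²`. -/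
def helmholtzDensity (e : ι → E) (fb : ℝ → ℝ → ℝ) (c : ℝ → ℝ) (n T : E → ℝ) (x : E) : ℝ :=
  fb (n x) (T x) + 1 / 2 * c (T x) * frameGradSq e n x

/-- The chemical potential `μ = ∂₁f_b(n,T) - ∇·(c(T)∇n)`, the variational derivative of the free
energy with respect to `n`. -/
def chemicalPotential (e : ι → E) (fb : ℝ → ℝ → ℝ) (c : ℝ → ℝ) (n T : E → ℝ) (x : E) : ℝ :=
  deriv (fun s ↦ fb s (T x)) (n x) - frameDiv e (fun i y ↦ c (T y) * fderiv ℝ n y (e i)) x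

/-- The coefficient `γ = ∂₂f_b(n,T) + ½ c'(T)|∇n|²`, the derivative of the free energy density
with respect to `T` (minus the entropy density). -/
def helmholtzTempDeriv (e : ι → E) (fb : ℝ → ℝ → ℝ) (c : ℝ → ℝ) (n T : E → ℝ) (x : E) : ℝ :=
  deriv (fun s ↦ fb (n x) s) (T x) + 1 / 2 * deriv c (T x) * frameGradSq e n x

theorem frameDiv_mul {e : ι → E} {m : E → ℝ} {v : ι → E → ℝ} {x : E}
    (hm : DifferentiableAt ℝ m x) (hv : ∀ i, DifferentiableAt ℝ (v i) x) :
    frameDiv e (fun i y ↦ m y * v i y) x =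
      m x * frameDiv e v x + ∑ i, v i x * fderiv ℝ m x (e i) := by
  simp [frameDiv, fderiv_fun_mul hm (hv _), Finset.sum_add_distrib, Finset.mul_sum]

theorem differentiableAt_frameGradSq {e : ι → E} {n : E → ℝ} {x : E}
    (hn : ContDiffAt ℝ 2 n x) : DifferentiableAt ℝ (frameGradSq e n) x := by
  have hn' := differentiableAt_fderiv_of_contDiffAt_two hn
  unfold frameGradSq
  fun_prop

theorem fderiv_frameGradSq_apply {e : ι → E} {n : E → ℝ} {x : E} (hn : ContDiffAt ℝ 2 n x)
    (τ : E) :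
    fderiv ℝ (frameGradSq e n) x τ =
      2 * ∑ i, fderiv ℝ n x (e i) * fderiv ℝ (fun y ↦ fderiv ℝ n y τ) x (e i) := by
  have hn' := differentiableAt_fderiv_of_contDiffAt_two hn
  have hsymm : IsSymmSndFDerivAt ℝ n x := hn.isSymmSndFDerivAt (by simp)
  have hdir i : DifferentiableAt ℝ (fun y ↦ fderiv ℝ n y (e i)) x := by fun_prop
  unfold frameGradSq
  rw [fderiv_fun_sum fun i _ ↦ (hdir i).fun_pow 2]
  simp [fderiv_fun_pow 2 (hdir _), fderiv_fderiv_apply_comm hsymm hn' (e _) τ, Finset.mul_sum,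
    mul_assoc]

theorem fderiv_half_mul_frameGradSq_apply {e : ι → E} {c : ℝ → ℝ} {n T : E → ℝ} {x : E}
    (hc : DifferentiableAt ℝ c (T x)) (hn : ContDiffAt ℝ 2 n x) (hT : DifferentiableAt ℝ T x)
    (τ : E) :
    fderiv ℝ (fun y ↦ 1 / 2 * c (T y) * frameGradSq e n y) x τ =
      1 / 2 * deriv c (T x) * frameGradSq e n x * fderiv ℝ T x τ +
        c (T x) * ∑ i, fderiv ℝ n x (e i) * fderiv ℝ (fun y ↦ fderiv ℝ n y τ) x (e i) := by
  have hcT : HasFDerivAt (fun y ↦ c (T y)) (deriv c (T x) • fderiv ℝ T x) x :=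
    hc.hasDerivAt.comp_hasFDerivAt x hT.hasFDerivAt
  rw [fderiv_fun_mul (hcT.differentiableAt.const_mul _) (differentiableAt_frameGradSq hn),
    (hcT.const_mul _).fderiv]
  simp only [add_apply, smul_apply, smul_eq_mul, fderiv_frameGradSq_apply hn]
  ring

theorem free_energy_transport_general {e : ι → E} {fb : ℝ → ℝ → ℝ} {c : ℝ → ℝ} {n T : E → ℝ}
    {x : E} (hfb : DifferentiableAt ℝ (fun p : ℝ × ℝ ↦ fb p.1 p.2) (n x, T x))
    (hc : DifferentiableAt ℝ c (T x)) (hn : ContDiffAt ℝ 2 n x) (hT : DifferentiableAt ℝ T x)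
    (τ : E) :
    fderiv ℝ (helmholtzDensity e fb c n T) x τ =
      helmholtzTempDeriv e fb c n T x * fderiv ℝ T x τ +
        chemicalPotential e fb c n T x * fderiv ℝ n x τ +
        frameDiv e (fun j y ↦ fderiv ℝ n y τ * (c (T y) * fderiv ℝ n y (e j))) x := by
  have hn₁ : DifferentiableAt ℝ n x := hn.differentiableAt (by simp)
  have hn' : DifferentiableAt ℝ (fderiv ℝ n) x := differentiableAt_fderiv_of_contDiffAt_two hn
  have hcT : DifferentiableAt ℝ (fun y ↦ c (T y)) x := hc.comp x hT
  have hbulk : DifferentiableAt ℝ (fun y ↦ fb (n y) (T y)) x :=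
    hfb.comp (f := fun y ↦ (n y, T y)) x (hn₁.prodMk hT)
  have hgrad : DifferentiableAt ℝ (fun y ↦ 1 / 2 * c (T y) * frameGradSq e n y) x :=
    (hcT.const_mul _).fun_mul (differentiableAt_frameGradSq hn)
  have hbulk_deriv : fderiv ℝ (fun y ↦ fb (n y) (T y)) x τ =
      deriv (fun s ↦ fb s (T x)) (n x) * fderiv ℝ n x τ +
        deriv (fun s ↦ fb (n x) s) (T x) * fderiv ℝ T x τ := by
    simp [fderiv_curried_comp_apply hfb hn₁ hT, fderiv_eq_smul_deriv, mul_comm]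
  have hflux : frameDiv e (fun j y ↦ fderiv ℝ n y τ * (c (T y) * fderiv ℝ n y (e j))) x =
      fderiv ℝ n x τ * frameDiv e (fun j y ↦ c (T y) * fderiv ℝ n y (e j)) x +
        c (T x) * ∑ i, fderiv ℝ n x (e i) * fderiv ℝ (fun y ↦ fderiv ℝ n y τ) x (e i) := by
    rw [frameDiv_mul (by fun_prop) (fun i ↦ by fun_prop), Finset.mul_sum]
    simp only [mul_assoc]
  unfold helmholtzDensity helmholtzTempDeriv chemicalPotential
  rw [fderiv_fun_add hbulk hgrad, add_apply, hbulk_deriv,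
    fderiv_half_mul_frameGradSq_apply hc hn hT, hflux]
  ring

end Helmholtz

/-- Transport of the Helmholtz free energy density: if `∂n/∂t + ∇·(nu) = 0`,
then `∂f/∂t = γ ∂T/∂t − μ∇·(nu) − ∇·((∇·(un)) c(T)∇n)`, stated componentwise
on `ℝ × ℝ^d` with `dt` the time derivative and `pd i` the `i`-th spatial
partial derivative. -/
theorem free_energy_transport
    (d : ℕ) (hd : 1 ≤ d)
    (fb : ℝ → ℝ → ℝ) (hfb : ContDiff ℝ (⊤ : ℕ∞) (fun q : ℝ × ℝ => fb q.1 q.2))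
    (c : ℝ → ℝ) (hc : ContDiff ℝ (⊤ : ℕ∞) c)
    (n T : ℝ × EuclideanSpace ℝ (Fin d) → ℝ)
    (hn : ContDiff ℝ (⊤ : ℕ∞) n) (hT : ContDiff ℝ (⊤ : ℕ∞) T)
    (u : Fin d → ℝ × EuclideanSpace ℝ (Fin d) → ℝ)
    (hu : ∀ j : Fin d, ContDiff ℝ (⊤ : ℕ∞) (u j))
    (dt : (ℝ × EuclideanSpace ℝ (Fin d) → ℝ) → ℝ × EuclideanSpace ℝ (Fin d) → ℝ)
    (hdt : ∀ (g : ℝ × EuclideanSpace ℝ (Fin d) → ℝ) q,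
      dt g q = fderiv ℝ g q (1, 0))
    (pd : Fin d → (ℝ × EuclideanSpace ℝ (Fin d) → ℝ) → ℝ × EuclideanSpace ℝ (Fin d) → ℝ)
    (hpd : ∀ (i : Fin d) (g : ℝ × EuclideanSpace ℝ (Fin d) → ℝ) q,
      pd i g q = fderiv ℝ g q (0, EuclideanSpace.single i 1))
    (mass : ∀ q, dt n q + ∑ i : Fin d, pd i (fun r => n r * u i r) q = 0)
    (μb γb μ γ f : ℝ × EuclideanSpace ℝ (Fin d) → ℝ)
    (hμb : ∀ q, μb q = deriv (fun s => fb s (T q)) (n q))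
    (hγb : ∀ q, γb q = deriv (fun s => fb (n q) s) (T q))
    (hμ : ∀ q, μ q = μb q - ∑ i : Fin d, pd i (fun r => c (T r) * pd i n r) q)
    (hγ : ∀ q, γ q = γb q + (1 / 2) * deriv c (T q) * ∑ i : Fin d, (pd i n q) ^ 2)
    (hf : ∀ q, f q = fb (n q) (T q) + (1 / 2) * c (T q) * ∑ i : Fin d, (pd i n q) ^ 2) :
    ∀ q,
      dt f q = γ q * dt T q - μ q * (∑ i : Fin d, pd i (fun r => n r * u i r) q)
        - ∑ j : Fin d,
            pd j (fun r =>
              (∑ i : Fin d, pd i (fun s => u i s * n s) r) * c (T r) * pd j n r) q := by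
  intro q
  set e : Fin d → ℝ × EuclideanSpace ℝ (Fin d) := fun i ↦ (0, EuclideanSpace.single i 1)
  have hf_eq : f = helmholtzDensity e fb c n T := by
    funext r
    simp only [hf, hpd, helmholtzDensity, frameGradSq, e]
  have hγ_eq : γ q = helmholtzTempDeriv e fb c n T q := by
    simp only [hγ, hγb, hpd, helmholtzTempDeriv, frameGradSq, e]
  have hμ_eq : μ q = chemicalPotential e fb c n T q := by
    simp only [hμ, hμb, hpd, chemicalPotential, frameDiv, e]
  have hdiv (r) : ∑ i, pd i (fun s ↦ n s * u i s) r = -fderiv ℝ n r (1, 0) := by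
    linarith [mass r, hdt n r]
  have hflux : ∑ j, pd j (fun r ↦ (∑ i, pd i (fun s ↦ u i s * n s) r) * c (T r) * pd j n r) q =
      -frameDiv e (fun j r ↦ fderiv ℝ n r (1, 0) * (c (T r) * fderiv ℝ n r (e j))) q := by
    simp_rw [mul_comm (u _ _), hdiv, hpd, neg_mul, mul_assoc, fderiv_fun_neg, neg_apply,
      Finset.sum_neg_distrib, frameDiv, e]
  rw [hdt, hdt, hf_eq, hγ_eq, hμ_eq, hdiv, hflux, mul_neg, sub_neg_eq_add, sub_neg_eq_add]
  exact free_energy_transport_general (hfb.differentiable (by simp) _)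
    (hc.differentiable (by simp) _) (contDiff_infty.1 hn 2).contDiffAt
    (hT.differentiable (by simp) q) (1, 0)
end
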